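/- arXiv:2212.14756 — 2 statements merged into one kernel-verified Lean document; each statement's English description precedes it below -/
import Mathlib

section
/- Let (A, g, h, f, p) be a tense H-algebra and let F be a filter of A. Then F is a negative tense filter if and only if for every u ∈ {g, h, f, p} and all x, y ∈ A: (x ⇨ y) ⊓ (y ⇨ x) ∈ F implies (u(x) ⇨ u(y)) ⊓ (u(y) ⇨ u(x)) ∈ F. -/
structure IsTenseH {A : Type*} [HeytingAlgebra A] (g h f p : A → A) : Prop where
  t1g : g ⊤ = ⊥
  t1h : h ⊤ = ⊥
  t2f : f ⊥ = ⊤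
  t2p : p ⊥ = ⊤
  t3g : ∀ x y : A, g (x ⊓ y) = g x ⊔ g y
  t3h : ∀ x y : A, h (x ⊓ y) = h x ⊔ h y
  t4f : ∀ x y : A, f (x ⊔ y) = f x ⊓ f y
  t4p : ∀ x y : A, p (x ⊔ y) = p x ⊓ p y
  t5gh : ∀ x : A, g (h x) ≤ x
  t5hg : ∀ x : A, h (g x) ≤ x
  t6pf : ∀ x : A, x ≤ p (f x)
  t6fp : ∀ x : A, x ≤ f (p x)
  t7g : ∀ x y : A, g x ⊓ f y ≤ g (x ⊔ y)
  t7h : ∀ x y : A, h x ⊓ p y ≤ h (x ⊔ y)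
  t8f : ∀ x y : A, f (x ⊓ y) ≤ f x ⊔ g y
  t8p : ∀ x y : A, p (x ⊓ y) ≤ p x ⊔ h y

def IsLatFilter {A : Type*} [HeytingAlgebra A] (F : Set A) : Prop :=
  F.Nonempty ∧ (∀ x y : A, x ∈ F → x ≤ y → y ∈ F) ∧ (∀ x y : A, x ∈ F → y ∈ F → x ⊓ y ∈ F)

def IsLatIdeal {A : Type*} [HeytingAlgebra A] (I : Set A) : Prop :=
  I.Nonempty ∧ (∀ x y : A, x ∈ I → y ≤ x → y ∈ I) ∧ (∀ x y : A, x ∈ I → y ∈ I → x ⊔ y ∈ I)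

def IsPrimeFilter {A : Type*} [HeytingAlgebra A] (F : Set A) : Prop :=
  IsLatFilter F ∧ (⊥ : A) ∉ F ∧ ∀ x y : A, x ⊔ y ∈ F → x ∈ F ∨ y ∈ F

def IsNegTenseFilter {A : Type*} [HeytingAlgebra A] (g h f p : A → A) (F : Set A) : Prop :=
  IsLatFilter F ∧
    ∀ u ∈ ({g, h, f, p} : Set (A → A)), ∀ x y : A, x ⇨ y ∈ F → u y ⇨ u x ∈ F

def thetaF {A : Type*} [HeytingAlgebra A] (F : Set A) (x y : A) : Prop :=
  (x ⇨ y) ⊓ (y ⇨ x) ∈ F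

def IsTenseCongruence {A : Type*} [HeytingAlgebra A] (g h f p : A → A)
    (θ : A → A → Prop) : Prop :=
  Equivalence θ ∧
    (∀ x₁ y₁ x₂ y₂ : A, θ x₁ y₁ → θ x₂ y₂ → θ (x₁ ⊓ x₂) (y₁ ⊓ y₂)) ∧
    (∀ x₁ y₁ x₂ y₂ : A, θ x₁ y₁ → θ x₂ y₂ → θ (x₁ ⊔ x₂) (y₁ ⊔ y₂)) ∧
    (∀ x₁ y₁ x₂ y₂ : A, θ x₁ y₁ → θ x₂ y₂ → θ (x₁ ⇨ x₂) (y₁ ⇨ y₂)) ∧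
    ∀ u ∈ ({g, h, f, p} : Set (A → A)), ∀ x y : A, θ x y → θ (u x) (u y)

def Nop {A : Type*} [HeytingAlgebra A] (g h : A → A) (a : A) : A :=
  (g a ⇨ ⊥) ⊓ (h a ⇨ ⊥)

def NIter {A : Type*} [HeytingAlgebra A] (N : A → A) : ℕ → A → A
  | 0, a => a
  | n + 1, a => N (NIter N n a)

def NPar {A : Type*} [HeytingAlgebra A] (N : A → A) : ℕ → A → A
  | 0, a => NIter N 0 a
  | k + 1, a => NPar N k a ⊓ NIter N (k + 1) a

theorem himp_inf_himp_inf_self {α : Type*} [GeneralizedHeytingAlgebra α] (x y : α) :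
    (x ⇨ x ⊓ y) ⊓ (x ⊓ y ⇨ x) = x ⇨ y := by
  rw [himp_inf_distrib, himp_self, top_inf_eq, himp_eq_top_iff.mpr inf_le_left, inf_top_eq]

theorem antitone_of_map_inf {α β : Type*} [SemilatticeInf α] [SemilatticeSup β] {u : α → β}
    (map_inf : ∀ x y, u (x ⊓ y) = u x ⊔ u y) : Antitone u :=
  antitoneOn_univ.mp (AntitoneOn.of_map_inf fun x _ y _ => map_inf x y)

theorem antitone_of_map_sup {α β : Type*} [SemilatticeSup α] [SemilatticeInf β] {u : α → β}
    (map_sup : ∀ x y, u (x ⊔ y) = u x ⊓ u y) : Antitone u :=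
  antitoneOn_univ.mp (AntitoneOn.of_map_sup fun x _ y _ => map_sup x y)

section

variable {A : Type*} [HeytingAlgebra A] {F : Set A}

theorem IsTenseH.antitone {g h f p u : A → A} (H : IsTenseH g h f p)
    (hu : u ∈ ({g, h, f, p} : Set (A → A))) : Antitone u := by
  rcases hu with rfl | rfl | rfl | rfl
  · exact antitone_of_map_inf H.t3g
  · exact antitone_of_map_inf H.t3h
  · exact antitone_of_map_sup H.t4f
  · exact antitone_of_map_sup H.t4p

theorem IsLatFilter.mem_of_le (hF : IsLatFilter F) {x y : A} (hx : x ∈ F) (hxy : x ≤ y) : y ∈ F :=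
  hF.2.1 x y hx hxy

theorem IsLatFilter.inf_mem_iff (hF : IsLatFilter F) {x y : A} : x ⊓ y ∈ F ↔ x ∈ F ∧ y ∈ F :=
  ⟨fun hxy => ⟨hF.mem_of_le hxy inf_le_left, hF.mem_of_le hxy inf_le_right⟩,
    fun ⟨hx, hy⟩ => hF.2.2 x y hx hy⟩

theorem IsLatFilter.thetaF_iff (hF : IsLatFilter F) {x y : A} :
    thetaF F x y ↔ x ⇨ y ∈ F ∧ y ⇨ x ∈ F :=
  hF.inf_mem_iff

theorem thetaF_inf_right_iff {x y : A} : thetaF F x (x ⊓ y) ↔ x ⇨ y ∈ F := by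
  rw [thetaF, himp_inf_himp_inf_self]

theorem stmt6_general (hF : IsLatFilter F) {u : A → A} (hu : Antitone u) :
    (∀ x y : A, x ⇨ y ∈ F → u y ⇨ u x ∈ F) ↔
      ∀ x y : A, thetaF F x y → thetaF F (u x) (u y) := by
  constructor
  · intro reverses x y hxy
    obtain ⟨hxy, hyx⟩ := hF.thetaF_iff.mp hxy
    exact hF.thetaF_iff.mpr ⟨reverses y x hyx, reverses x y hxy⟩
  · intro preserves x y hxy
    -- Modulo `F`, `x ⇨ y ∈ F` says that `x` equals `x ⊓ y`, which lies below `y` in `A`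
    -- itself, so that antitonicity of `u` applies.
    have huxy : thetaF F (u x) (u (x ⊓ y)) :=
      preserves x (x ⊓ y) (thetaF_inf_right_iff.mpr hxy)
    have himp_mem : u (x ⊓ y) ⇨ u x ∈ F := (hF.thetaF_iff.mp huxy).2
    exact hF.mem_of_le himp_mem (himp_le_himp_right (hu inf_le_right))

end

theorem stmt6 {A : Type*} [HeytingAlgebra A] (g h f p : A → A)
    (H : IsTenseH g h f p) (F : Set A) (hF : IsLatFilter F) :
    IsNegTenseFilter g h f p F ↔
      ∀ u ∈ ({g, h, f, p} : Set (A → A)), ∀ x y : A,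
        (x ⇨ y) ⊓ (y ⇨ x) ∈ F → (u x ⇨ u y) ⊓ (u y ⇨ u x) ∈ F :=
  (and_iff_right hF).trans (forall₂_congr fun _ hu => stmt6_general hF (H.antitone hu))
end

section
/- Let (A, g, h, f, p) be a tense H-algebra, define [N](a) = ¬g(a) ⊓ ¬h(a) (where ¬x = x ⇨ 0), let [N]⁰(a) = a, [N]ⁿ⁺¹(a) = [N]([N]ⁿ(a)), and [N]⁽ᵏ⁾(a) = [N]⁰(a) ⊓ [N]¹(a) ⊓ ⋯ ⊓ [N]ᵏ(a). Let X be a nonempty subset of A. Then the smallest negative tense filter of A containing X equals { y ∈ A : there exist n ≥ 1, x₁, …, xₙ ∈ X and k ∈ ℕ such that [N]⁽ᵏ⁾(x₁ ⊓ ⋯ ⊓ xₙ) ≤ y }. -/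
/-!
A filter is closed under the four implications defining negative tense filters exactly when it is
closed under `Nop g h`: applying `g` and `h` to `⊤ ⇨ a` yields `Nop g h a`, and conversely
`Nop g h (x ⇨ y)` lies below each `u y ⇨ u x`. Since `Nop g h` preserves meets, the smallest filter
containing a set and closed under `Nop g h` is obtained by taking finite meets, then finite meets
of their iterates, then the upward closure.
-/

section

variable {A : Type*} [HeytingAlgebra A]

theorem foldr_inf_append (l m : List A) :
    (l ++ m).foldr (· ⊓ ·) ⊤ = l.foldr (· ⊓ ·) ⊤ ⊓ m.foldr (· ⊓ ·) ⊤ := by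
  rw [List.foldr_append, ← List.foldr_assoc (α := A) (op := (· ⊓ ·)), top_inf_eq]

theorem antitone_of_map_inf_s15 {u : A → A} (hu : ∀ x y, u (x ⊓ y) = u x ⊔ u y) : Antitone u :=
  Monotone.of_map_inf (β := Aᵒᵈ) hu

theorem antitone_of_map_sup_s15 {u : A → A} (hu : ∀ x y, u (x ⊔ y) = u x ⊓ u y) : Antitone u :=
  Monotone.of_map_sup (β := Aᵒᵈ) hu

namespace IsLatFilter

variable {F : Set A}

theorem mem_of_le_s15 (hF : IsLatFilter F) {x y : A} (hx : x ∈ F) (hxy : x ≤ y) : y ∈ F :=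
  hF.2.1 x y hx hxy

theorem inf_mem (hF : IsLatFilter F) {x y : A} (hx : x ∈ F) (hy : y ∈ F) : x ⊓ y ∈ F :=
  hF.2.2 x y hx hy

theorem top_mem (hF : IsLatFilter F) : ⊤ ∈ F :=
  let ⟨_, hx⟩ := hF.1
  hF.mem_of_le_s15 hx le_top

theorem foldr_inf_mem (hF : IsLatFilter F) {l : List A} (hl : ∀ x ∈ l, x ∈ F) :
    l.foldr (· ⊓ ·) ⊤ ∈ F := by
  induction l with
  | nil => exact hF.top_mem
  | cons a l ih =>
    rw [List.forall_mem_cons] at hl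
    exact hF.inf_mem hl.1 (ih hl.2)

end IsLatFilter

section Iterates

variable {N : A → A}

theorem NIter_eq_iterate (N : A → A) (n : ℕ) : NIter N n = N^[n] := by
  induction n with
  | zero => rfl
  | succ n ih => rw [Function.iterate_succ', ← ih]; rfl

theorem monotone_NPar (hN : Monotone N) (k : ℕ) : Monotone (NPar N k) := by
  induction k with
  | zero => exact monotone_id
  | succ k ih =>
    have hiter : Monotone (NIter N (k + 1)) := NIter_eq_iterate N (k + 1) ▸ hN.iterate (k + 1)
    exact ih.inf hiter

theorem antitone_NPar_apply (N : A → A) (a : A) : Antitone fun k => NPar N k a :=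
  antitone_nat_of_succ_le fun _ => inf_le_left

theorem NPar_succ_le_apply_NPar (hN : ∀ x y, N x ⊓ N y ≤ N (x ⊓ y)) (k : ℕ) (a : A) :
    NPar N (k + 1) a ≤ N (NPar N k a) := by
  induction k with
  | zero => exact inf_le_right
  | succ k ih =>
    calc NPar N (k + 2) a ≤ N (NPar N k a) ⊓ N (NIter N (k + 1) a) := inf_le_inf_right _ ih
      _ ≤ N (NPar N (k + 1) a) := hN _ _

theorem IsLatFilter.NPar_mem {F : Set A} (hF : IsLatFilter F) (hN : Set.MapsTo N F F)
    {a : A} (ha : a ∈ F) (k : ℕ) : NPar N k a ∈ F := by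
  induction k with
  | zero => exact ha
  | succ k ih =>
    have hiter : NIter N (k + 1) a ∈ F := NIter_eq_iterate N (k + 1) ▸ hN.iterate (k + 1) ha
    exact hF.inf_mem ih hiter

end Iterates

/-- The filter spanned by `X` and the operator `N`: the elements above some `NPar N k` of a finite
meet of elements of `X`. For meet-preserving `N` and nonempty `X` it is the smallest filter
containing `X` and closed under `N`. Only nonempty meets are taken, so it is empty when `X` is. -/
def filterSpan (N : A → A) (X : Set A) : Set A :=
  {y : A | ∃ l : List A, l ≠ [] ∧ (∀ x ∈ l, x ∈ X) ∧
    ∃ k : ℕ, NPar N k (l.foldr (· ⊓ ·) ⊤) ≤ y}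

section FilterSpan

variable {N : A → A} {X F : Set A}

theorem subset_filterSpan (N : A → A) (X : Set A) : X ⊆ filterSpan N X := fun x hx =>
  ⟨[x], List.cons_ne_nil x [], List.forall_mem_singleton.2 hx, 0, inf_le_left⟩

theorem isLatFilter_filterSpan (hN : Monotone N) (hX : X.Nonempty) :
    IsLatFilter (filterSpan N X) := by
  refine ⟨hX.mono (subset_filterSpan N X), ?_, ?_⟩
  · rintro x y ⟨l, hl, hlX, k, hx⟩ hxy
    exact ⟨l, hl, hlX, k, hx.trans hxy⟩
  · rintro x y ⟨l, hl, hlX, j, hx⟩ ⟨m, -, hmX, k, hy⟩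
    refine ⟨l ++ m, List.append_ne_nil_of_left_ne_nil hl m,
      List.forall_mem_append.2 ⟨hlX, hmX⟩, max j k, ?_⟩
    rw [foldr_inf_append]
    exact le_inf
      ((antitone_NPar_apply N _ (le_max_left j k)).trans
        ((monotone_NPar hN j inf_le_left).trans hx))
      ((antitone_NPar_apply N _ (le_max_right j k)).trans
        ((monotone_NPar hN k inf_le_right).trans hy))

theorem mapsTo_filterSpan (hN : ∀ x y, N (x ⊓ y) = N x ⊓ N y) :
    Set.MapsTo N (filterSpan N X) (filterSpan N X) := by
  rintro x ⟨l, hl, hlX, k, hx⟩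
  exact ⟨l, hl, hlX, k + 1, (NPar_succ_le_apply_NPar (fun x y => (hN x y).ge) k _).trans
    (Monotone.of_map_inf hN hx)⟩

theorem filterSpan_subset (hF : IsLatFilter F) (hN : Set.MapsTo N F F) (hXF : X ⊆ F) :
    filterSpan N X ⊆ F := by
  rintro y ⟨l, -, hlX, k, hy⟩
  have hmeet : l.foldr (· ⊓ ·) ⊤ ∈ F := hF.foldr_inf_mem fun x hx => hXF (hlX x hx)
  exact hF.mem_of_le_s15 (hF.NPar_mem hN hmeet k) hy

end FilterSpan

section NegTenseFilter

variable {g h f p : A → A} {F X : Set A}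

theorem Nop_inf (g_inf : ∀ x y, g (x ⊓ y) = g x ⊔ g y) (h_inf : ∀ x y, h (x ⊓ y) = h x ⊔ h y)
    (x y : A) : Nop g h (x ⊓ y) = Nop g h x ⊓ Nop g h y := by
  simp only [Nop, g_inf, h_inf, sup_himp_distrib, inf_inf_inf_comm]

theorem himp_bot_le_himp_of_antitone {u v : A → A} (hu : Antitone u)
    (huv : ∀ x y, u (x ⊓ y) ≤ u x ⊔ v y) (x y : A) : v (x ⇨ y) ⇨ ⊥ ≤ u y ⇨ u x := by
  have hle : u y ≤ u x ⊔ v (x ⇨ y) := (hu inf_himp_le).trans (huv x (x ⇨ y))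
  calc v (x ⇨ y) ⇨ ⊥ ≤ v (x ⇨ y) ⇨ u x := himp_le_himp_left bot_le
    _ = u x ⊔ v (x ⇨ y) ⇨ u x := by rw [sup_himp_distrib, himp_self, top_inf_eq]
    _ ≤ u y ⇨ u x := himp_le_himp_right hle

theorem IsNegTenseFilter.mapsTo_Nop (hF : IsNegTenseFilter g h f p F) (g_top : g ⊤ = ⊥)
    (h_top : h ⊤ = ⊥) : Set.MapsTo (Nop g h) F F := by
  intro a ha
  have htop : ⊤ ⇨ a ∈ F := by rwa [top_himp]
  have hg : g a ⇨ ⊥ ∈ F := g_top ▸ hF.2 g (by simp) ⊤ a htop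
  have hh : h a ⇨ ⊥ ∈ F := h_top ▸ hF.2 h (by simp) ⊤ a htop
  exact hF.1.inf_mem hg hh

theorem IsLatFilter.isNegTenseFilter_of_mapsTo_Nop (hF : IsLatFilter F)
    (hN : Set.MapsTo (Nop g h) F F)
    (g_inf : ∀ x y, g (x ⊓ y) = g x ⊔ g y) (h_inf : ∀ x y, h (x ⊓ y) = h x ⊔ h y)
    (hf : Antitone f) (hp : Antitone p)
    (f_inf_le : ∀ x y, f (x ⊓ y) ≤ f x ⊔ g y) (p_inf_le : ∀ x y, p (x ⊓ y) ≤ p x ⊔ h y) :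
    IsNegTenseFilter g h f p F := by
  refine ⟨hF, fun u hu x y hxy => hF.mem_of_le_s15 (hN hxy) ?_⟩
  rcases hu with rfl | rfl | rfl | rfl
  · exact inf_le_left.trans <|
      himp_bot_le_himp_of_antitone (antitone_of_map_inf_s15 g_inf) (fun x y => (g_inf x y).le) x y
  · exact inf_le_right.trans <|
      himp_bot_le_himp_of_antitone (antitone_of_map_inf_s15 h_inf) (fun x y => (h_inf x y).le) x y
  · exact inf_le_left.trans <| himp_bot_le_himp_of_antitone hf f_inf_le x y
  · exact inf_le_right.trans <| himp_bot_le_himp_of_antitone hp p_inf_le x y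

theorem stmt15_general (g_top : g ⊤ = ⊥) (h_top : h ⊤ = ⊥)
    (g_inf : ∀ x y, g (x ⊓ y) = g x ⊔ g y) (h_inf : ∀ x y, h (x ⊓ y) = h x ⊔ h y)
    (hf : Antitone f) (hp : Antitone p)
    (f_inf_le : ∀ x y, f (x ⊓ y) ≤ f x ⊔ g y) (p_inf_le : ∀ x y, p (x ⊓ y) ≤ p x ⊔ h y)
    (hX : X.Nonempty) :
    IsLeast {F : Set A | IsNegTenseFilter g h f p F ∧ X ⊆ F} (filterSpan (Nop g h) X) := by
  have hN : ∀ x y, Nop g h (x ⊓ y) = Nop g h x ⊓ Nop g h y := Nop_inf g_inf h_inf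
  have hspan : IsLatFilter (filterSpan (Nop g h) X) :=
    isLatFilter_filterSpan (Monotone.of_map_inf hN) hX
  refine ⟨⟨?_, subset_filterSpan (Nop g h) X⟩, ?_⟩
  · exact hspan.isNegTenseFilter_of_mapsTo_Nop (mapsTo_filterSpan hN)
      g_inf h_inf hf hp f_inf_le p_inf_le
  · rintro F ⟨hF, hXF⟩
    exact filterSpan_subset hF.1 (hF.mapsTo_Nop g_top h_top) hXF

end NegTenseFilter

end

theorem stmt15 {A : Type*} [HeytingAlgebra A] (g h f p : A → A)
    (H : IsTenseH g h f p) (X : Set A) (hX : X.Nonempty) :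
    IsNegTenseFilter g h f p
        {y : A | ∃ l : List A, l ≠ [] ∧ (∀ x ∈ l, x ∈ X) ∧
          ∃ k : ℕ, NPar (Nop g h) k (l.foldr (· ⊓ ·) ⊤) ≤ y} ∧
      X ⊆ {y : A | ∃ l : List A, l ≠ [] ∧ (∀ x ∈ l, x ∈ X) ∧
          ∃ k : ℕ, NPar (Nop g h) k (l.foldr (· ⊓ ·) ⊤) ≤ y} ∧
      ∀ F : Set A, IsNegTenseFilter g h f p F → X ⊆ F →
        {y : A | ∃ l : List A, l ≠ [] ∧ (∀ x ∈ l, x ∈ X) ∧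
          ∃ k : ℕ, NPar (Nop g h) k (l.foldr (· ⊓ ·) ⊤) ≤ y} ⊆ F := by
  obtain ⟨⟨hspan, hX_sub⟩, hleast⟩ := stmt15_general H.t1g H.t1h H.t3g H.t3h
    (antitone_of_map_sup_s15 H.t4f) (antitone_of_map_sup_s15 H.t4p) H.t8f H.t8p hX
  exact ⟨hspan, hX_sub, fun F hF hXF => hleast ⟨hF, hXF⟩⟩
end
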